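/- arXiv:1408.6210 — 6 statements merged into one kernel-verified Lean document; each statement's English description precedes it below -/
import Mathlib

section
/- Let (P, ω) be a finite weighted point cloud in ℝ^d with nonnegative weights, δ_P its power distance, and R > 0. Then for any integrable probe function χ : ℝ^d → [0,∞), one has V_{δ_P,R}(χ) = Σ_{p∈P} χ(p) M_p, where M_p := ∫_{C_p} (x − p) ⊗ (x − p) dx and C_p := Pow_P(p) ∩ B̄(p, (R² − ω_p)^{1/2}) (the ball being empty when R² − ω_p < 0). -/
open MeasureTheory Metric Filter
open scoped NNReal ENNReal

noncomputable section

abbrev Euc (d : ℕ) := EuclideanSpace ℝ (Fin d)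

/-- Power distance of a weighted point cloud. -/
def powerDist {d : ℕ} (P : Finset (Euc d)) (ω : Euc d → ℝ) (x : Euc d) : ℝ :=
  Real.sqrt (sInf ((fun p => ‖x - p‖ ^ 2 + ω p) '' (P : Set (Euc d))))

/-- Power cell of `p`. -/
def powerCell {d : ℕ} (P : Finset (Euc d)) (ω : Euc d → ℝ) (p : Euc d) : Set (Euc d) :=
  {x | ∀ q ∈ P, ‖x - p‖ ^ 2 + ω p ≤ ‖x - q‖ ^ 2 + ω q}

def nvec {d : ℕ} (δ : Euc d → ℝ) (x : Euc d) : Euc d :=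
  (1 / 2 : ℝ) • gradient (fun y => δ y ^ 2) x

def tensor {d : ℕ} (v w : Euc d) : Euc d →L[ℝ] Euc d :=
  (ContinuousLinearMap.toSpanSingleton ℝ v).comp (innerSL ℝ w)

def VCM {d : ℕ} (δ : Euc d → ℝ) (R : ℝ) (χ : Euc d → ℝ) : Euc d →L[ℝ] Euc d :=
  ∫ x in {y : Euc d | δ y ≤ R}, χ (x - nvec δ x) • tensor (nvec δ x) (nvec δ x)

theorem aux_powerDist_sq {d : ℕ} (P : Finset (Euc d)) (ω : Euc d → ℝ) (hω : ∀ p ∈ P, 0 ≤ ω p)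
    {p : Euc d} (hp : p ∈ P) {x : Euc d} (hx : x ∈ powerCell P ω p) :
    powerDist P ω x ^ 2 = ‖x - p‖ ^ 2 + ω p := by
  have h : sInf ((fun p => ‖x - p‖ ^ 2 + ω p) '' (P : Set (Euc d))) = ‖x - p‖ ^ 2 + ω p := by
    apply IsLeast.csInf_eq
    refine ⟨⟨p, hp, rfl⟩, ?_⟩
    rintro _ ⟨q, hq, rfl⟩
    exact hx q hq
  unfold powerDist
  rw [h, Real.sq_sqrt]
  have := hω p hp
  positivity

def strictCell {d : ℕ} (P : Finset (Euc d)) (ω : Euc d → ℝ) (p : Euc d) : Set (Euc d) :=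
  {x | ∀ q ∈ P, q ≠ p → ‖x - p‖ ^ 2 + ω p < ‖x - q‖ ^ 2 + ω q}

theorem strictCell_subset {d : ℕ} (P : Finset (Euc d)) (ω : Euc d → ℝ) (p : Euc d) :
    strictCell P ω p ⊆ powerCell P ω p := by
  intro x hx q hq
  by_cases h : q = p
  · rw [h]
  · exact (hx q hq h).le

theorem isOpen_strictCell {d : ℕ} (P : Finset (Euc d)) (ω : Euc d → ℝ) (p : Euc d) :
    IsOpen (strictCell P ω p) := by
  have : strictCell P ω p =
      ⋂ q ∈ P, {x | q ≠ p → ‖x - p‖ ^ 2 + ω p < ‖x - q‖ ^ 2 + ω q} := by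
    ext x; simp [strictCell]
  rw [this]
  refine isOpen_biInter_finset fun q _ => ?_
  by_cases h : q = p
  · simp [h]
  · simp only [ne_eq, h, not_false_eq_true, forall_const]
    exact isOpen_lt (by fun_prop) (by fun_prop)

theorem bisector_null {d : ℕ} (ω : Euc d → ℝ) {p q : Euc d} (h : p ≠ q) :
    volume {x : Euc d | ‖x - p‖ ^ 2 + ω p = ‖x - q‖ ^ 2 + ω q} = 0 := by
  rcases Set.eq_empty_or_nonempty {x : Euc d | ‖x - p‖ ^ 2 + ω p = ‖x - q‖ ^ 2 + ω q}
    with he | ⟨x0, hx0⟩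
  · rw [he]; simp
  set K : Submodule ℝ (Euc d) := LinearMap.ker (innerSL ℝ (q - p) : Euc d →L[ℝ] ℝ).toLinearMap
  refine measure_mono_null (t := (AffineSubspace.mk' x0 K : Set (Euc d))) ?_ ?_
  · intro x hx
    simp only [Set.mem_setOf_eq] at hx hx0
    simp only [SetLike.mem_coe, AffineSubspace.mem_mk', K, LinearMap.mem_ker, vsub_eq_sub]
    change inner ℝ (q - p) (x - x0) = 0
    rw [norm_sub_sq_real, norm_sub_sq_real] at hx hx0
    rw [inner_sub_left, inner_sub_right, inner_sub_right, real_inner_comm x, real_inner_comm x0,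
      real_inner_comm x, real_inner_comm x0]
    linarith
  · apply Measure.addHaar_affineSubspace
    intro ht
    have hd : K = ⊤ := by
      rw [← AffineSubspace.direction_mk' x0 K, ht, AffineSubspace.direction_top]
    have hm : q - p ∈ K := by rw [hd]; trivial
    have h0 : inner ℝ (q - p) (q - p) = (0 : ℝ) := hm
    rw [inner_self_eq_zero, sub_eq_zero] at h0
    exact h h0.symm

theorem ae_good {d : ℕ} (P : Finset (Euc d)) (ω : Euc d → ℝ) :
    ∀ᵐ x : Euc d, ∀ p ∈ P, ∀ q ∈ P, p ≠ q → ‖x - p‖ ^ 2 + ω p ≠ ‖x - q‖ ^ 2 + ω q := by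
  have := (ae_ball_iff (μ := (volume : Measure (Euc d))) (S := (P : Set (Euc d)))
    (p := fun x p _ => ∀ q ∈ P, p ≠ q → ‖x - p‖ ^ 2 + ω p ≠ ‖x - q‖ ^ 2 + ω q)
    P.countable_toSet).2
  apply this
  intro p _
  have := (ae_ball_iff (μ := (volume : Measure (Euc d))) (S := (P : Set (Euc d)))
    (p := fun x q _ => p ≠ q → ‖x - p‖ ^ 2 + ω p ≠ ‖x - q‖ ^ 2 + ω q)
    P.countable_toSet).2
  apply this
  intro q _
  by_cases h : p = q
  · simp [h]
  · have := bisector_null ω h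
    rw [ae_iff]
    refine measure_mono_null ?_ this
    intro x hx
    simp only [Set.mem_setOf_eq] at hx ⊢
    by_contra hc
    exact hx fun _ => hc

theorem nvec_eq {d : ℕ} (P : Finset (Euc d)) (ω : Euc d → ℝ) (hω : ∀ p ∈ P, 0 ≤ ω p)
    {p : Euc d} (hp : p ∈ P) {x : Euc d} (hx : x ∈ strictCell P ω p) :
    nvec (powerDist P ω) x = x - p := by
  have hev : (fun y => powerDist P ω y ^ 2) =ᶠ[nhds x] fun y => ‖y - p‖ ^ 2 + ω p := by
    filter_upwards [(isOpen_strictCell P ω p).mem_nhds hx] with y hy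
    exact aux_powerDist_sq P ω hω hp (strictCell_subset P ω p hy)
  have hg : HasGradientAt (fun y : Euc d => ‖y - p‖ ^ 2 + ω p) ((2 : ℝ) • (x - p)) x := by
    rw [hasGradientAt_iff_hasFDerivAt]
    have h1 := (((hasFDerivAt_id x).sub_const p).norm_sq).add_const (ω p)
    refine h1.congr_fderiv ?_
    ext v
    simp [InnerProductSpace.toDual_apply_apply, inner_smul_left]
  unfold nvec
  rw [(hg.congr_of_eventuallyEq hev).gradient, smul_smul]
  norm_num

theorem stmt0 {d : ℕ} (P : Finset (Euc d)) (hP : P.Nonempty)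
    (ω : Euc d → ℝ) (hω : ∀ p ∈ P, 0 ≤ ω p) (R : ℝ) (hR : 0 < R)
    (χ : Euc d → ℝ) (hχ0 : ∀ x, 0 ≤ χ x) (hχint : Integrable χ) :
    VCM (powerDist P ω) R χ =
      ∑ p ∈ P, χ p •
        ∫ x in powerCell P ω p ∩ {x : Euc d | ‖x - p‖ ^ 2 ≤ R ^ 2 - ω p},
          tensor (x - p) (x - p) := by
  set B : Euc d → Set (Euc d) := fun p => {x : Euc d | ‖x - p‖ ^ 2 ≤ R ^ 2 - ω p} with hB
  have hBclosed : ∀ p, IsClosed (B p) := fun p => isClosed_le (by fun_prop) (by fun_prop)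
  have hBcpt : ∀ p ∈ P, IsCompact (B p) := by
    intro p hp
    refine (isCompact_closedBall p R).of_isClosed_subset (hBclosed p) ?_
    intro x hx
    have hx' : ‖x - p‖ ^ 2 ≤ R ^ 2 - ω p := hx
    have := hω p hp
    rw [mem_closedBall, dist_eq_norm]
    exact le_of_sq_le_sq (by linarith) hR.le
  have hcont : ∀ p : Euc d, Continuous fun x : Euc d => tensor (x - p) (x - p) := by
    intro p
    unfold tensor
    have h1 : Continuous fun x : Euc d => ContinuousLinearMap.toSpanSingleton ℝ (x - p) :=
      (ContinuousLinearMap.toSpanSingletonCLE (𝕜 := ℝ) (E := Euc d)).continuous.comp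
        (by fun_prop : Continuous fun x : Euc d => x - p)
    have h2 : Continuous fun x : Euc d => innerSL ℝ (x - p) := by fun_prop
    exact h1.clm_comp h2
  have hdist : ∀ p ∈ P, ∀ x ∈ powerCell P ω p, (powerDist P ω x ≤ R ↔ x ∈ B p) := by
    intro p hp x hx
    have h := aux_powerDist_sq P ω hω hp hx
    have h0 : 0 ≤ powerDist P ω x := Real.sqrt_nonneg _
    rw [← sq_le_sq₀ h0 hR.le, h]
    simp only [hB, Set.mem_setOf_eq]
    constructor <;> intro <;> linarith
  have hset : {y : Euc d | powerDist P ω y ≤ R} =ᵐ[volume] ⋃ p ∈ P, (strictCell P ω p ∩ B p) := by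
    filter_upwards [ae_good P ω] with x hx
    apply propext
    change powerDist P ω x ≤ R ↔ x ∈ ⋃ p ∈ P, (strictCell P ω p ∩ B p)
    simp only [Set.mem_iUnion, exists_prop]
    constructor
    · intro h
      obtain ⟨p, hp, hmin⟩ := P.exists_min_image (fun p => ‖x - p‖ ^ 2 + ω p) hP
      exact ⟨p, hp, fun q hq hqp => lt_of_le_of_ne (hmin q hq) (hx p hp q hq hqp.symm),
        (hdist p hp x hmin).1 h⟩
    · rintro ⟨p, hp, h1, h2⟩
      exact (hdist p hp x (strictCell_subset P ω p h1)).2 h2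
  have hset2 : ∀ p ∈ P, (powerCell P ω p ∩ B p : Set (Euc d)) =ᵐ[volume]
      (strictCell P ω p ∩ B p : Set (Euc d)) := by
    intro p hp
    filter_upwards [ae_good P ω] with x hx
    apply propext
    change x ∈ powerCell P ω p ∩ B p ↔ x ∈ strictCell P ω p ∩ B p
    constructor
    · rintro ⟨h1, h2⟩
      exact ⟨fun q hq hqp => lt_of_le_of_ne (h1 q hq) (hx p hp q hq hqp.symm), h2⟩
    · rintro ⟨h1, h2⟩
      exact ⟨strictCell_subset P ω p h1, h2⟩
  have hmeas : ∀ p ∈ P, MeasurableSet (strictCell P ω p ∩ B p) := fun p _ =>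
    (isOpen_strictCell P ω p).measurableSet.inter (hBclosed p).measurableSet
  have heq : ∀ p ∈ P, Set.EqOn
      (fun x => χ (x - nvec (powerDist P ω) x) •
        tensor (nvec (powerDist P ω) x) (nvec (powerDist P ω) x))
      (fun x => χ p • tensor (x - p) (x - p)) (strictCell P ω p ∩ B p) := by
    intro p hp x hx
    simp only [nvec_eq P ω hω hp hx.1, sub_sub_cancel]
  unfold VCM
  rw [setIntegral_congr_set hset, integral_biUnion_finset P hmeas]
  · refine Finset.sum_congr rfl fun p hp => ?_
    rw [setIntegral_congr_fun (hmeas p hp) (heq p hp), integral_smul,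
      setIntegral_congr_set (hset2 p hp)]
  · intro p hp q hq hpq
    refine Set.disjoint_left.2 fun x hx hx' => ?_
    exact lt_asymm (hx.1 q hq hpq.symm) (hx'.1 p hp hpq)
  · intro p hp
    refine IntegrableOn.congr_fun ?_ (heq p hp).symm (hmeas p hp)
    refine IntegrableOn.mono_set ?_ Set.inter_subset_right
    exact ((hcont p).const_smul (χ p)).continuousOn.integrableOn_compact (hBcpt p hp)
end
end

section
/- There is a constant C₃ depending only on the dimension d such that the following holds. Let E ⊂ ℝ^d be a bounded open set with rectifiable boundary and ε > 0. For any two distance-like functions δ, δ' on ℝ^d with sup_{x∈E}|δ(x) − δ'(x)| ≤ ε, one has ∫_E ‖n_{δ'}(x) − n_δ(x)‖ dx ≤ C₃ [H^d(E) + (2 diam(E) + 4R + (2Rε)^{1/2}) H^{d−1}(∂E)] (2Rε)^{1/2}, where R := max(sup_{x∈E} δ(x), sup_{x∈E} δ'(x)). -/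
open MeasureTheory Metric Filter
open scoped NNReal ENNReal

noncomputable section

/-- A function `δ : ℝ^d → [0,∞)` is distance-like if it is nonnegative, proper
and `δ²` is 1-semiconcave, i.e. `x ↦ ‖x‖² - δ x ^ 2` is convex. -/
def DistanceLike {d : ℕ} (δ : Euc d → ℝ) : Prop :=
  (∀ x, 0 ≤ δ x) ∧
  Tendsto δ (comap (fun x : Euc d => ‖x‖) atTop) atTop ∧
  ConvexOn ℝ Set.univ (fun x : Euc d => ‖x‖ ^ 2 - δ x ^ 2)

/-- A set `s ⊆ ℝ^d` is a rectifiable boundary-type set if it is `(d-1)`-rectifiable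
(covered, up to an `H^{d-1}`-null set, by countably many Lipschitz images of `ℝ^{d-1}`)
and has finite `H^{d-1}` measure. -/
def RectifiableCodimOne (d : ℕ) (s : Set (Euc d)) : Prop :=
  μH[(d - 1 : ℝ)] s < ⊤ ∧
  ∃ f : ℕ → (EuclideanSpace ℝ (Fin (d - 1)) → Euc d),
    (∀ n, ∃ K : ℝ≥0, LipschitzWith K (f n)) ∧
    μH[(d - 1 : ℝ)] (s \ ⋃ n, Set.range (f n)) = 0

section helpers

variable {d : ℕ}

/-- The semiconcavity inequality at a differentiability point. -/
lemma aux_semiconcave {δ : Euc d → ℝ} (hδ : DistanceLike δ) {x : Euc d}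
    (hx : DifferentiableAt ℝ (fun y => δ y ^ 2) x) (v : Euc d) :
    δ (x + v) ^ 2 ≤ δ x ^ 2 + 2 * inner ℝ (nvec δ x) v + ‖v‖ ^ 2 := by
  obtain ⟨-, -, hconv⟩ := hδ
  have hline : ConvexOn ℝ Set.univ
      (fun t : ℝ => ‖AffineMap.lineMap (k := ℝ) x (x + v) t‖ ^ 2
        - δ (AffineMap.lineMap (k := ℝ) x (x + v) t) ^ 2) :=
    hconv.comp_affineMap (AffineMap.lineMap (k := ℝ) x (x + v))
  have hl : HasDerivAt (fun t : ℝ => AffineMap.lineMap (k := ℝ) x (x + v) t) v 0 := by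
    have := AffineMap.hasDerivAt_lineMap (𝕜 := ℝ) (a := x) (b := x + v) (x := 0)
    simpa using this
  have h1 : HasDerivAt (fun t : ℝ => ‖AffineMap.lineMap (k := ℝ) x (x + v) t‖ ^ 2)
      (2 * inner ℝ x v) 0 := by
    have := hl.norm_sq
    simpa using this
  have h2 : HasDerivAt (fun t : ℝ => δ (AffineMap.lineMap (k := ℝ) x (x + v) t) ^ 2)
      (2 * inner ℝ (nvec δ x) v) 0 := by
    have hg : HasFDerivAt (fun y => δ y ^ 2) (fderiv ℝ (fun y => δ y ^ 2) x)
        (AffineMap.lineMap (k := ℝ) x (x + v) (0 : ℝ)) := by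
      simpa using hx.hasFDerivAt
    have := hg.comp_hasDerivAt (0 : ℝ) hl
    have hv : 2 * inner ℝ (nvec δ x) v = fderiv ℝ (fun y => δ y ^ 2) x v := by
      rw [nvec, gradient, real_inner_smul_left, InnerProductSpace.toDual_symm_apply]
      ring
    rw [hv]
    exact this
  have h3 := hline.le_slope_of_hasDerivAt (Set.mem_univ 0) (Set.mem_univ 1) one_pos (h1.sub h2)
  simp only [slope_def_field, AffineMap.lineMap_apply_one, AffineMap.lineMap_apply_zero] at h3
  have h4 := norm_add_sq_real x v
  linarith

lemma aux_norm_le {δ : Euc d → ℝ} (hδ : DistanceLike δ) {x : Euc d}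
    (hx : DifferentiableAt ℝ (fun y => δ y ^ 2) x) : ‖nvec δ x‖ ≤ δ x := by
  have h := aux_semiconcave hδ hx (-nvec δ x)
  rw [inner_neg_right, real_inner_self_eq_norm_sq, norm_neg] at h
  have h2 := sq_nonneg (δ (x + -nvec δ x))
  exact abs_le_of_sq_le_sq' (by linarith) (hδ.1 x) |>.2

lemma aux_step {δ δ' : Euc d → ℝ} (hδ : DistanceLike δ) (hδ' : DistanceLike δ')
    {x : Euc d} {i : Fin d} {h : ℝ} (hh : 0 < h)
    (hx : DifferentiableAt ℝ (fun y => δ y ^ 2) x)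
    (hx' : DifferentiableAt ℝ (fun y => δ' y ^ 2) (x + h • EuclideanSpace.single i (1 : ℝ)))
    (h1 : |δ x ^ 2 - δ' x ^ 2| ≤ h ^ 2)
    (h2 : |δ (x + h • EuclideanSpace.single i (1 : ℝ)) ^ 2
      - δ' (x + h • EuclideanSpace.single i (1 : ℝ)) ^ 2| ≤ h ^ 2) :
    nvec δ' (x + h • EuclideanSpace.single i (1 : ℝ)) i - nvec δ x i ≤ 2 * h := by
  set e : Euc d := h • EuclideanSpace.single i (1 : ℝ) with he
  have hn : ‖e‖ = h := by simp [he, norm_smul, abs_of_pos hh]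
  have hi : ∀ w : Euc d, inner ℝ w e = h * w i := by
    intro w
    simp [he, inner_smul_right, EuclideanSpace.inner_single_right]
  have a1 := aux_semiconcave hδ hx e
  have a2 := aux_semiconcave hδ' hx' (-e)
  rw [inner_neg_right, norm_neg, hi, hn, add_neg_cancel_right] at a2
  rw [hi, hn] at a1
  rw [abs_le] at h1 h2
  have : h * (nvec δ' (x + e) i - nvec δ x i) ≤ h * (2 * h) := by nlinarith
  exact le_of_mul_le_mul_left this hh

lemma aux_ae_diff {δ : Euc d → ℝ} (hδ : DistanceLike δ) :
    ∀ᵐ x : Euc d, DifferentiableAt ℝ (fun y => δ y ^ 2) x := by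
  have hL := hδ.2.2.locallyLipschitz
  have key : ∀ᵐ x : Euc d, DifferentiableAt ℝ (fun y : Euc d => ‖y‖ ^ 2 - δ y ^ 2) x := by
    rw [ae_iff]
    refine measure_null_of_locally_null _ fun x _ => ?_
    obtain ⟨K, t, ht, hK⟩ := hL x
    obtain ⟨u, hut, huo, hxu⟩ := _root_.mem_nhds_iff.1 ht
    refine ⟨_, inter_mem_nhdsWithin _ (huo.mem_nhds hxu), ?_⟩
    have := (hK.mono hut).ae_differentiableWithinAt_of_mem (μ := volume)
    rw [ae_iff] at this
    refine measure_mono_null ?_ this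
    rintro y ⟨hy, hyu⟩ hc
    exact hy ((hc hyu).differentiableAt (huo.mem_nhds hyu))
  filter_upwards [key] with x hx
  have h2 : DifferentiableAt ℝ (fun y : Euc d => ‖y‖ ^ 2) x :=
    differentiableAt_id.norm_sq ℝ
  have := h2.sub hx
  refine this.congr_of_eventuallyEq (Eventually.of_forall fun y => ?_)
  simp

lemma aux_meas (δ : Euc d → ℝ) : Measurable (nvec δ) := by
  have : Measurable (fun x => gradient (fun y => δ y ^ 2) x) :=
    (LinearIsometryEquiv.continuous _).measurable.comp (measurable_fderiv ℝ _)
  exact (continuous_const_smul (1 / 2 : ℝ)).measurable.comp this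

lemma aux_meas_coord (δ : Euc d → ℝ) (i : Fin d) : Measurable (fun x => nvec δ x i) := by
  exact (EuclideanSpace.proj (𝕜 := ℝ) i).continuous.measurable.comp (aux_meas δ)

/-- Volume of a box-shaped sweep. -/
lemma aux_box (S : Set (Euc d)) (i : Fin d) {h : ℝ} (hh : 0 < h) (hS : S.Nonempty)
    (hd : Metric.ediam S ≤ ENNReal.ofReal h) :
    volume {x : Euc d | ∃ s ∈ Set.Icc (0 : ℝ) h, x + s • EuclideanSpace.single i (1 : ℝ) ∈ S}
      ≤ ENNReal.ofReal (3 * 2 ^ (d - 1) * h) * Metric.ediam S ^ ((d : ℝ) - 1) := by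
  obtain ⟨p, hp⟩ := hS
  have hfin : Metric.ediam S ≠ ⊤ := ne_top_of_le_ne_top ENNReal.ofReal_ne_top hd
  set r := (Metric.ediam S).toReal with hr
  have hr0 : 0 ≤ r := ENNReal.toReal_nonneg
  have hrS : Metric.ediam S = ENNReal.ofReal r := (ENNReal.ofReal_toReal hfin).symm
  have hrh : r ≤ h := by
    rw [hrS] at hd
    exact (ENNReal.ofReal_le_ofReal_iff hh.le).1 hd
  set lo : Fin d → ℝ := fun j => p j - r - if j = i then h else 0 with hlo
  set hi : Fin d → ℝ := fun j => p j + r with hhi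
  have hsub : {x : Euc d | ∃ s ∈ Set.Icc (0 : ℝ) h,
      x + s • EuclideanSpace.single i (1 : ℝ) ∈ S} ⊆ WithLp.ofLp ⁻¹' (Set.Icc lo hi) := by
    rintro x ⟨s, ⟨hs0, hs1⟩, hx⟩
    have hdist : dist (x + s • EuclideanSpace.single i (1 : ℝ)) p ≤ r := by
      rw [hr, dist_edist]
      exact ENNReal.toReal_mono hfin (Metric.edist_le_ediam_of_mem hx hp)
    have hc : ∀ j, |x j + s * (if j = i then 1 else 0) - p j| ≤ r := by
      intro j
      have h1 := PiLp.norm_apply_le (x + s • EuclideanSpace.single i (1 : ℝ) - p) j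
      rw [← dist_eq_norm] at h1
      have h2 := h1.trans hdist
      simpa [Pi.single_apply, Real.norm_eq_abs] using h2
    constructor
    · intro j
      have := abs_le.1 (hc j)
      simp only [hlo]
      split_ifs at this ⊢ <;> linarith
    · intro j
      have := abs_le.1 (hc j)
      simp only [hhi]
      split_ifs at this ⊢ <;> linarith
  refine (measure_mono hsub).trans ?_
  rw [(PiLp.volume_preserving_ofLp (Fin d)).measure_preimage measurableSet_Icc.nullMeasurableSet,
    Real.volume_Icc_pi]
  have hprod : ∏ j, ENNReal.ofReal (hi j - lo j)
      = ENNReal.ofReal (2 * r + h) * ENNReal.ofReal (2 * r) ^ (d - 1) := by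
    rw [← Finset.mul_prod_erase Finset.univ _ (Finset.mem_univ i)]
    congr 1
    · congr 1
      simp only [hlo, hhi, if_true]
      ring
    · rw [Finset.prod_congr rfl (g := fun _ => ENNReal.ofReal (2 * r))]
      · simp
      · intro j hj
        congr 1
        simp only [hlo, hhi, if_neg (Finset.ne_of_mem_erase hj)]
        ring
  rw [hprod]
  have hexp : ((d : ℝ) - 1) = ((d - 1 : ℕ) : ℝ) := by
    have : 1 ≤ d := i.pos
    push_cast [this]
    ring
  rw [hexp, ENNReal.rpow_natCast, hrS, ← ENNReal.ofReal_pow (by positivity),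
    ← ENNReal.ofReal_pow hr0, ← ENNReal.ofReal_mul (by positivity),
    ← ENNReal.ofReal_mul (by positivity)]
  apply ENNReal.ofReal_le_ofReal
  rw [mul_pow]
  have h0 : 0 ≤ 2 ^ (d - 1) * r ^ (d - 1) := by positivity
  nlinarith [mul_le_mul_of_nonneg_right (show 2 * r + h ≤ 3 * h by linarith) h0]

lemma aux_sweep (A : Set (Euc d)) (i : Fin d) {h : ℝ} (hh : 0 < h) :
    volume {x : Euc d | ∃ s ∈ Set.Icc (0 : ℝ) h, x + s • EuclideanSpace.single i (1 : ℝ) ∈ A}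
      ≤ ENNReal.ofReal (3 * 2 ^ (d - 1) * h) * μH[(d - 1 : ℝ)] A := by
  set c := ENNReal.ofReal (3 * 2 ^ (d - 1) * h) with hc
  have hc0 : c ≠ 0 := by
    rw [hc, Ne, ENNReal.ofReal_eq_zero, not_le]
    positivity
  have hct : c ≠ ⊤ := ENNReal.ofReal_ne_top
  rw [mul_comm, ← ENNReal.div_le_iff hc0 hct, Measure.hausdorffMeasure_apply]
  refine le_trans ?_ (le_iSup₂ (f := fun (r : ℝ≥0∞) (_ : 0 < r) =>
    ⨅ (t : ℕ → Set (Euc d)) (_ : A ⊆ ⋃ n, t n) (_ : ∀ n, Metric.ediam (t n) ≤ r),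
      ∑' n, ⨆ _ : (t n).Nonempty, Metric.ediam (t n) ^ ((d : ℝ) - 1))
    (ENNReal.ofReal h) (ENNReal.ofReal_pos.2 hh))
  refine le_iInf fun t => le_iInf fun ht => le_iInf fun hr => ?_
  rw [ENNReal.div_le_iff hc0 hct, mul_comm, ← ENNReal.tsum_mul_left]
  have hsub : {x : Euc d | ∃ s ∈ Set.Icc (0 : ℝ) h,
      x + s • EuclideanSpace.single i (1 : ℝ) ∈ A} ⊆ ⋃ n, {x : Euc d | ∃ s ∈ Set.Icc (0 : ℝ) h,
      x + s • EuclideanSpace.single i (1 : ℝ) ∈ t n} := by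
    rintro x ⟨s, hs, hx⟩
    obtain ⟨n, hn⟩ := Set.mem_iUnion.1 (ht hx)
    exact Set.mem_iUnion.2 ⟨n, s, hs, hn⟩
  refine (measure_mono hsub).trans ((measure_iUnion_le _).trans (ENNReal.tsum_le_tsum fun n => ?_))
  by_cases hne : (t n).Nonempty
  · simp only [hne, iSup_pos]
    exact aux_box (t n) i hh hne (hr n)
  · rw [Set.not_nonempty_iff_eq_empty] at hne
    simp [hne]

lemma aux_cross {E : Set (Euc d)} (hE : IsOpen E) {x e : Euc d} {h : ℝ} (hh : 0 < h)
    (hx : x ∈ E) (hxe : x + h • e ∉ E) :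
    ∃ s ∈ Set.Icc (0 : ℝ) h, x + s • e ∈ frontier E := by
  by_contra! hcon
  have hcont : Continuous (fun s : ℝ => x + s • e) := by fun_prop
  have hpre : IsPreconnected (Set.Icc (0 : ℝ) h) := isPreconnected_Icc
  obtain ⟨s, hs, hs1, hs2⟩ := hpre ((fun s : ℝ => x + s • e) ⁻¹' E)
    ((fun s : ℝ => x + s • e) ⁻¹' (closure E)ᶜ) (hE.preimage hcont)
    (isClosed_closure.isOpen_compl.preimage hcont)
    (by
      intro s hs
      by_cases hsE : x + s • e ∈ E
      · exact Or.inl hsE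
      · right
        intro hcl
        apply hcon s hs
        rw [hE.frontier_eq]
        exact ⟨hcl, hsE⟩)
    ⟨0, ⟨le_rfl, hh.le⟩, by simpa using hx⟩
    ⟨h, ⟨hh.le, le_rfl⟩, by
      intro hcl
      apply hcon h ⟨hh.le, le_rfl⟩
      rw [hE.frontier_eq]
      exact ⟨hcl, hxe⟩⟩
  exact hs2 (subset_closure hs1)

/-- The telescoping estimate for a bounded function. -/
lemma aux_shift {E : Set (Euc d)} (hE : IsOpen E) (hEf : volume E ≠ ⊤) (e : Euc d)
    {w : Euc d → ℝ} (hw : Measurable w) {R : ℝ} (hR : ∀ᵐ x ∂(volume.restrict E), |w x| ≤ R) :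
    IntegrableOn (fun x => w (x + e)) (E ∩ (· + e) ⁻¹' E) ∧
    ∫ x in E ∩ (· + e) ⁻¹' E, (w x - w (x + e))
      ≤ 2 * R * (volume (E \ (E ∩ (· + e) ⁻¹' E))).toReal := by
  set F := E ∩ (· + e) ⁻¹' E with hF
  set G := E ∩ (· - e) ⁻¹' E with hG
  have hFm : MeasurableSet F :=
    (hE.inter (hE.preimage (by fun_prop))).measurableSet
  have hGm : MeasurableSet G :=
    (hE.inter (hE.preimage (by fun_prop))).measurableSet
  have hFG : F = (· + e) ⁻¹' G := by
    ext x
    simp [hF, hG, and_comm]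
  have hint : IntegrableOn w E := by
    refine Measure.integrableOn_of_bounded (M := R) hEf hw.aestronglyMeasurable ?_
    simpa [Real.norm_eq_abs] using hR
  have hmp : MeasurePreserving (fun x : Euc d => x + e) volume volume :=
    measurePreserving_add_right volume e
  have hemb : MeasurableEmbedding (fun x : Euc d => x + e) := measurableEmbedding_addRight e
  have hintG : IntegrableOn w G := hint.mono_set Set.inter_subset_left
  have hintF : IntegrableOn w F := hint.mono_set Set.inter_subset_left
  have hi2 : IntegrableOn (fun x => w (x + e)) F := by
    rw [hFG]
    exact (hmp.integrableOn_comp_preimage hemb).2 hintG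
  refine ⟨hi2, ?_⟩
  rw [integral_sub hintF hi2]
  have heq : ∫ x in F, w (x + e) = ∫ x in G, w x := by
    rw [hFG]
    exact hmp.setIntegral_preimage_emb hemb w G
  have hvol : volume F = volume G := by
    rw [hFG]
    exact hmp.measure_preimage hGm.nullMeasurableSet
  have hvd : volume (E \ G) = volume (E \ F) := by
    rw [measure_sdiff Set.inter_subset_left hGm.nullMeasurableSet
        (ne_top_of_le_ne_top hEf (measure_mono Set.inter_subset_left)),
      measure_sdiff Set.inter_subset_left hFm.nullMeasurableSet
        (ne_top_of_le_ne_top hEf (measure_mono Set.inter_subset_left)), hvol]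
  have s1 := setIntegral_sdiff hFm hint (Set.inter_subset_left : F ⊆ E)
  have s2 := setIntegral_sdiff hGm hint (Set.inter_subset_left : G ⊆ E)
  have hb : ∀ T : Set (Euc d), T ⊆ E → MeasurableSet T →
      |∫ x in T, w x| ≤ R * (volume T).toReal := by
    intro T hT hTm
    have := norm_setIntegral_le_of_norm_le_const_ae' (μ := volume) (s := T) (f := w) (C := R)
      (lt_of_le_of_lt (measure_mono hT) hEf.lt_top) (by
        rw [ae_restrict_iff' hE.measurableSet] at hR
        filter_upwards [hR] with x hx hxT
        exact hx (hT hxT))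
    simpa [Measure.real] using this
  have b1 := abs_le.1 (hb (E \ F) Set.sdiff_subset (hE.measurableSet.diff hFm))
  have b2 := abs_le.1 (hb (E \ G) Set.sdiff_subset (hE.measurableSet.diff hGm))
  rw [hvd] at b2
  rw [heq]
  linarith [b1.1, b1.2, b2.1, b2.2]

lemma aux_coord {E : Set (Euc d)} (hE : IsOpen E) (hEb : Bornology.IsBounded E)
    (hfr : μH[(d - 1 : ℝ)] (frontier E) < ⊤)
    {δ δ' : Euc d → ℝ} (hδ : DistanceLike δ) (hδ' : DistanceLike δ') {R h : ℝ} (hh : 0 < h)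
    (hR : ∀ x ∈ E, δ x ≤ R) (hR' : ∀ x ∈ E, δ' x ≤ R) (hR0 : 0 ≤ R)
    (hD : ∀ x ∈ E, |δ x ^ 2 - δ' x ^ 2| ≤ h ^ 2) (i : Fin d) :
    IntegrableOn (fun x => |nvec δ' x i - nvec δ x i|) E ∧
    ∫ x in E, |nvec δ' x i - nvec δ x i| ≤ 4 * h * (volume E).toReal
      + 18 * 2 ^ (d - 1) * R * h * (μH[(d - 1 : ℝ)] (frontier E)).toReal := by
  have hEf : volume E ≠ ⊤ := hEb.measure_lt_top.ne
  set e : Euc d := h • EuclideanSpace.single i (1 : ℝ) with he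
  have hm := aux_meas_coord δ i
  have hm' := aux_meas_coord δ' i
  have hbd : ∀ {η : Euc d → ℝ}, DistanceLike η → (∀ x ∈ E, η x ≤ R) →
      ∀ᵐ x ∂(volume.restrict E), |nvec η x i| ≤ R := by
    intro η hη hηR
    rw [ae_restrict_iff' hE.measurableSet]
    filter_upwards [aux_ae_diff hη] with x hx hxE
    exact (PiLp.norm_apply_le (nvec η x) i).trans ((aux_norm_le hη hx).trans (hηR x hxE))
  have hb := hbd hδ hR
  have hb' := hbd hδ' hR'
  obtain ⟨i1, s1⟩ := aux_shift hE hEf e hm hb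
  obtain ⟨i2, s2⟩ := aux_shift hE hEf e hm' hb'
  set F := E ∩ (· + e) ⁻¹' E with hF
  have hFm : MeasurableSet F :=
    (hE.inter (hE.preimage (by fun_prop))).measurableSet
  have hFE : F ⊆ E := Set.inter_subset_left
  have hint : ∀ {η : Euc d → ℝ}, Measurable (fun x => nvec η x i) →
      (∀ᵐ x ∂(volume.restrict E), |nvec η x i| ≤ R) →
      IntegrableOn (fun x => nvec η x i) E := by
    intro η h1 h2
    refine Measure.integrableOn_of_bounded (M := R) hEf h1.aestronglyMeasurable ?_
    simpa [Real.norm_eq_abs] using h2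
  have hI := hint hm hb
  have hI' := hint hm' hb'
  have habs : IntegrableOn (fun x => |nvec δ' x i - nvec δ x i|) E := (hI'.sub hI).abs
  refine ⟨habs, ?_⟩
  have hsplit := setIntegral_sdiff hFm habs hFE
  -- the bad part
  have hbad : ∫ x in E \ F, |nvec δ' x i - nvec δ x i| ≤ 2 * R * (volume (E \ F)).toReal := by
    have := norm_setIntegral_le_of_norm_le_const_ae' (μ := volume) (s := E \ F)
      (f := fun x => |nvec δ' x i - nvec δ x i|) (C := 2 * R)
      (lt_of_le_of_lt (measure_mono Set.sdiff_subset) hEf.lt_top) (by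
        rw [ae_restrict_iff' hE.measurableSet] at hb hb'
        filter_upwards [hb, hb'] with x hx hx' hxT
        have a1 := abs_le.1 (hx hxT.1)
        have a2 := abs_le.1 (hx' hxT.1)
        rw [Real.norm_eq_abs, abs_abs, abs_le]
        constructor <;> linarith [a1.1, a1.2, a2.1, a2.2])
    exact (le_abs_self _).trans (by simpa [Measure.real] using this)
  -- the good part
  have hgood : ∫ x in F, |nvec δ' x i - nvec δ x i| ≤
      4 * h * (volume F).toReal + 4 * R * (volume (E \ F)).toReal := by
    have hFf : volume F ≠ ⊤ := ne_top_of_le_ne_top hEf (measure_mono hFE)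
    have j1 : IntegrableOn (fun x => nvec δ x i - nvec δ (x + e) i) F := (hI.mono_set hFE).sub i1
    have j2 : IntegrableOn (fun x => nvec δ' x i - nvec δ' (x + e) i) F :=
      (hI'.mono_set hFE).sub i2
    have j0 : IntegrableOn (fun _ : Euc d => 4 * h) F := integrableOn_const hFf
    have hle : ∫ x in F, |nvec δ' x i - nvec δ x i| ≤ ∫ x in F, (4 * h
        + ((nvec δ x i - nvec δ (x + e) i) + (nvec δ' x i - nvec δ' (x + e) i))) := by
      refine integral_mono_ae (habs.mono_set hFE) (j0.add (j1.add j2)) ?_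
      refine (ae_restrict_iff' hFm).2 ?_
      have hmp : MeasurePreserving (fun x : Euc d => x + e) volume volume :=
        measurePreserving_add_right volume e
      have k1 := aux_ae_diff hδ
      have k2 := aux_ae_diff hδ'
      filter_upwards [k1, k2, hmp.quasiMeasurePreserving.ae k1,
        hmp.quasiMeasurePreserving.ae k2] with x h1 h2 h3 h4 hxF
      have hxE : x ∈ E := hxF.1
      have hxE' : x + e ∈ E := hxF.2
      have q1 := hD x hxE
      have q2 := hD (x + e) hxE'
      have z1 : |δ x ^ 2 - δ x ^ 2| ≤ h ^ 2 := by simp [sq_nonneg]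
      have z2 : |δ (x + e) ^ 2 - δ (x + e) ^ 2| ≤ h ^ 2 := by simp [sq_nonneg]
      have z3 : |δ' x ^ 2 - δ' x ^ 2| ≤ h ^ 2 := by simp [sq_nonneg]
      have z4 : |δ' (x + e) ^ 2 - δ' (x + e) ^ 2| ≤ h ^ 2 := by simp [sq_nonneg]
      have c1 := aux_step hδ hδ' hh h1 h4 q1 q2
      have c2 := aux_step hδ' hδ hh h2 h3 (by rwa [abs_sub_comm]) (by rwa [abs_sub_comm])
      have c3 := aux_step hδ hδ hh h1 h3 z1 z2
      have c4 := aux_step hδ' hδ' hh h2 h4 z3 z4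
      rw [← he] at c1 c2 c3 c4
      rw [abs_le]
      constructor <;> linarith
    refine hle.trans ?_
    have e1 : ∫ x in F, (4 * h
        + ((nvec δ x i - nvec δ (x + e) i) + (nvec δ' x i - nvec δ' (x + e) i)))
        = (∫ x in F, 4 * h) + ((∫ x in F, (nvec δ x i - nvec δ (x + e) i))
          + ∫ x in F, (nvec δ' x i - nvec δ' (x + e) i)) := by
      have := integral_add j1 j2
      rw [← this]
      exact integral_add j0 (j1.add j2)
    rw [e1, setIntegral_const, smul_eq_mul, Measure.real]
    linarith
  have hV : (volume (E \ F)).toReal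
      ≤ 3 * 2 ^ (d - 1) * h * (μH[(d - 1 : ℝ)] (frontier E)).toReal := by
    have hsub : E \ F ⊆ {x : Euc d | ∃ s ∈ Set.Icc (0 : ℝ) h,
        x + s • EuclideanSpace.single i (1 : ℝ) ∈ frontier E} := by
      rintro x ⟨hxE, hxF⟩
      exact aux_cross hE hh hxE (fun hc => hxF ⟨hxE, hc⟩)
    have h1 := (measure_mono hsub).trans (aux_sweep (frontier E) i hh)
    have h2 := ENNReal.toReal_mono (ENNReal.mul_ne_top ENNReal.ofReal_ne_top hfr.ne) h1
    rwa [ENNReal.toReal_mul, ENNReal.toReal_ofReal (by positivity)] at h2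
  have hVF : (volume F).toReal ≤ (volume E).toReal :=
    ENNReal.toReal_mono hEf (measure_mono hFE)
  have t1 : 4 * h * (volume F).toReal ≤ 4 * h * (volume E).toReal := by gcongr
  have t2 := mul_le_mul_of_nonneg_left hV (show 0 ≤ 6 * R by linarith)
  linarith

lemma aux_vol (d : ℕ) : ∃ c : ℝ, 0 ≤ c ∧ ∀ E : Set (Euc d),
    (volume E).toReal ≤ c * (μH[(d : ℝ)] E).toReal := by
  have hH : Measure.IsAddHaarMeasure (μH[(d : ℝ)] : Measure (Euc d)) := by
    simpa using MeasureTheory.isAddHaarMeasure_hausdorffMeasure (E := Euc d)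
  have := Measure.isAddLeftInvariant_eq_smul (volume : Measure (Euc d)) μH[(d : ℝ)]
  refine ⟨Measure.addHaarScalarFactor (volume : Measure (Euc d)) μH[(d : ℝ)],
    NNReal.coe_nonneg _, fun E => ?_⟩
  conv_lhs => rw [this]
  rw [Measure.smul_apply]
  simp [ENNReal.smul_def]

lemma aux_norm_sum (v : Euc d) : ‖v‖ ≤ ∑ i, |v i| := by
  have h : v = ∑ i, v i • EuclideanSpace.single i (1 : ℝ) := by
    ext j
    simp [Pi.single_apply]
  calc ‖v‖ = ‖∑ i, v i • EuclideanSpace.single i (1 : ℝ)‖ := by rw [← h]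
    _ ≤ ∑ i, ‖v i • (EuclideanSpace.single i (1 : ℝ) : Euc d)‖ := norm_sum_le _ _
    _ = ∑ i, |v i| := by simp [norm_smul]

end helpers

/-- `L¹` stability of gradients of distance-like functions: for a bounded open set `E`
with rectifiable boundary, if `δ, δ'` are distance-like with `sup_E |δ - δ'| ≤ ε` and
`R` bounds both `δ` and `δ'` on `E`, then
`∫_E ‖n_{δ'} - n_δ‖ ≤ C₃ [H^d(E) + (2 diam E + 4R + √(2Rε)) H^{d-1}(∂E)] √(2Rε)`. -/
theorem stmt4 (d : ℕ) :
    ∃ C₃ > 0, ∀ E : Set (Euc d), IsOpen E → Bornology.IsBounded E →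
      RectifiableCodimOne d (frontier E) →
      ∀ ε : ℝ, 0 < ε →
      ∀ δ δ' : Euc d → ℝ, DistanceLike δ → DistanceLike δ' →
      (∀ x ∈ E, |δ x - δ' x| ≤ ε) →
      ∀ R : ℝ, (∀ x ∈ E, δ x ≤ R) → (∀ x ∈ E, δ' x ≤ R) →
      (∫ x in E, ‖nvec δ' x - nvec δ x‖) ≤
        C₃ * ((μH[(d : ℝ)] E).toReal +
            (2 * Metric.diam E + 4 * R + Real.sqrt (2 * R * ε)) *
              (μH[(d - 1 : ℝ)] (frontier E)).toReal) *
          Real.sqrt (2 * R * ε) := by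
  obtain ⟨c, hc0, hc⟩ := aux_vol d
  refine ⟨(d + 1) * (4 * c + 18 * 2 ^ (d - 1)), by positivity, ?_⟩
  intro E hE hEb hrect ε hε δ δ' hδ hδ' hdiff R hR hR'
  rcases E.eq_empty_or_nonempty with rfl | ⟨x₀, hx₀⟩
  · simp
  have hR0 : 0 ≤ R := (hδ.1 x₀).trans (hR x₀ hx₀)
  set h := Real.sqrt (2 * R * ε) with hh
  have hh0 : 0 ≤ h := Real.sqrt_nonneg _
  set H := (μH[(d - 1 : ℝ)] (frontier E)).toReal with hH
  have hH0 : 0 ≤ H := ENNReal.toReal_nonneg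
  set V := (μH[(d : ℝ)] E).toReal with hV
  have hV0 : 0 ≤ V := ENNReal.toReal_nonneg
  have hdiam : 0 ≤ Metric.diam E := Metric.diam_nonneg
  rcases hR0.eq_or_lt with hR00 | hRpos
  · have hz : ∀ {η : Euc d → ℝ}, DistanceLike η → (∀ x ∈ E, η x ≤ R) → ∀ x ∈ E, nvec η x = 0 := by
      intro η hη hηR x hx
      have : (fun y => η y ^ 2) =ᶠ[nhds x] fun _ => (0 : ℝ) := by
        filter_upwards [hE.mem_nhds hx] with y hy
        have : η y = 0 := le_antisymm ((hηR y hy).trans hR00.symm.le) (hη.1 y)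
        simp [this]
      simp [nvec, gradient, this.fderiv_eq]
    have : ∫ x in E, ‖nvec δ' x - nvec δ x‖ = 0 := by
      rw [setIntegral_congr_fun (g := fun _ => (0 : ℝ)) hE.measurableSet]
      · simp
      · intro x hx
        simp [hz hδ hR x hx, hz hδ' hR' x hx]
    rw [this]
    positivity
  have hhpos : 0 < h := Real.sqrt_pos.2 (by positivity)
  have hsq : h ^ 2 = 2 * R * ε := Real.sq_sqrt (by positivity)
  have hD : ∀ x ∈ E, |δ x ^ 2 - δ' x ^ 2| ≤ h ^ 2 := by
    intro x hx
    have h1 : δ x ^ 2 - δ' x ^ 2 = (δ x + δ' x) * (δ x - δ' x) := by ring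
    have a1 := hδ.1 x
    have a2 := hδ'.1 x
    rw [h1, abs_mul, abs_of_nonneg (add_nonneg a1 a2), hsq]
    exact mul_le_mul (by linarith [hR x hx, hR' x hx]) (hdiff x hx) (abs_nonneg _) (by positivity)
  have hco := fun i => aux_coord hE hEb hrect.1 hδ hδ' hhpos hR hR' hR0 hD i
  have hsum : ∫ x in E, ‖nvec δ' x - nvec δ x‖ ≤ ∑ i, ∫ x in E, |nvec δ' x i - nvec δ x i| := by
    rw [← integral_finsetSum _ (fun i _ => (hco i).1)]
    refine integral_mono_of_nonneg (Eventually.of_forall fun x => norm_nonneg _)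
      (integrable_finsetSum _ (fun i _ => (hco i).1)) (Eventually.of_forall fun x => ?_)
    exact aux_norm_sum (nvec δ' x - nvec δ x)
  refine hsum.trans ((Finset.sum_le_sum fun i _ => (hco i).2).trans ?_)
  rw [Finset.sum_const, Finset.card_univ, Fintype.card_fin, nsmul_eq_mul]
  have hcE : (volume E).toReal ≤ c * V := hc E
  have hP : (1 : ℝ) ≤ 2 ^ (d - 1) := one_le_pow₀ (by norm_num)
  set P : ℝ := 2 ^ (d - 1) with hPdef
  set K := 2 * Metric.diam E + 4 * R + h with hK
  have hRK : R ≤ K := by linarith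
  have hK0 : 0 ≤ K := hR0.trans hRK
  calc (d : ℝ) * (4 * h * (volume E).toReal + 18 * P * R * h * H)
      ≤ (d + 1) * (4 * h * (c * V) + 18 * P * K * h * H) := by
        gcongr
        linarith
    _ ≤ (d + 1) * (4 * h * (c * V) + 18 * P * K * h * H
          + (4 * c * (K * H) * h + 18 * P * V * h)) := by
        refine mul_le_mul_of_nonneg_left ?_ (by positivity)
        exact le_add_of_nonneg_right (by positivity)
    _ = (d + 1) * (4 * c + 18 * P) * (V + K * H) * h := by ring
end
end

section
/- Let E ⊂ ℝ^d be bounded, and let δ, δ' be distance-like functions. Set R := max(sup_{x∈E} δ(x), sup_{x∈E} δ'(x)), ψ_δ(x) := ‖x‖² − δ(x)² and ψ_{δ'}(x) := ‖x‖² − δ'(x)². Then diam(∇ψ_δ(E) ∪ ∇ψ_{δ'}(E)) ≤ 2 diam(E) + 4R, where ∇ψ_δ(E) denotes the set of gradients of ψ_δ at the points of E where ψ_δ is differentiable (and similarly for ψ_{δ'}). -/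
open MeasureTheory Metric Filter
open scoped NNReal ENNReal

noncomputable section

/-- `∇f(E)`: the set of gradients of `f` at the points of `E` where `f` is
differentiable. -/
def gradSet {d : ℕ} (f : Euc d → ℝ) (E : Set (Euc d)) : Set (Euc d) :=
  {g | ∃ x ∈ E, DifferentiableAt ℝ f x ∧ gradient f x = g}

lemma grad_bound {d : ℕ} (δ : Euc d → ℝ) (hδ : DistanceLike δ) (x : Euc d)
    (hd : DifferentiableAt ℝ (fun x : Euc d => ‖x‖ ^ 2 - δ x ^ 2) x) :
    ‖gradient (fun x : Euc d => ‖x‖ ^ 2 - δ x ^ 2) x - (2:ℝ) • x‖ ≤ 2 * δ x := by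
  obtain ⟨h0, -, hc⟩ := hδ
  have hg := hd.hasGradientAt
  set f := (fun x : Euc d => ‖x‖ ^ 2 - δ x ^ 2) with hf
  set g := gradient f x with hgdef
  set y : Euc d := (1/2:ℝ) • g with hy
  have hline : ConvexOn ℝ Set.univ (f ∘ (AffineMap.lineMap x y : ℝ →ᵃ[ℝ] Euc d)) := by
    simpa using hc.comp_affineMap (AffineMap.lineMap x y : ℝ →ᵃ[ℝ] Euc d)
  have hder : HasDerivAt (f ∘ (AffineMap.lineMap x y : ℝ →ᵃ[ℝ] Euc d)) (inner ℝ g (y - x)) 0 := by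
    have h1 : HasFDerivAt f (InnerProductSpace.toDual ℝ (Euc d) g)
        ((AffineMap.lineMap x y : ℝ →ᵃ[ℝ] Euc d) 0) := by
      simpa using hg.hasFDerivAt
    have h2 := h1.comp_hasDerivAt (0:ℝ) (AffineMap.hasDerivAt_lineMap (a := x) (b := y))
    simpa using h2
  have hs := hline.le_slope_of_hasDerivAt (Set.mem_univ (0:ℝ)) (Set.mem_univ (1:ℝ)) one_pos hder
  have hs' : inner ℝ g (y - x) ≤ f y - f x := by
    simpa [slope_def_field] using hs
  have e : ‖g - (2:ℝ) • x‖ ^ 2 ≤ (2 * δ x) ^ 2 := by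
    rw [@norm_sub_sq_real, norm_smul, inner_smul_right]
    have : ‖y‖ = 1/2 * ‖g‖ := by rw [hy, norm_smul]; norm_num
    simp only [hf, this, inner_sub_right] at hs'
    rw [hy, inner_smul_right, real_inner_self_eq_norm_sq] at hs'
    have := sq_nonneg (δ ((1/2:ℝ) • g))
    have h2 : ‖(2:ℝ)‖ = 2 := by norm_num
    rw [h2]
    nlinarith
  exact (sq_le_sq₀ (norm_nonneg _) (by have := h0 x; positivity)).mp e

theorem stmt6 {d : ℕ} (E : Set (Euc d)) (hE : Bornology.IsBounded E)
    (δ δ' : Euc d → ℝ) (hδ : DistanceLike δ) (hδ' : DistanceLike δ')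
    (R : ℝ) (hR0 : 0 ≤ R) (hRδ : ∀ x ∈ E, δ x ≤ R) (hRδ' : ∀ x ∈ E, δ' x ≤ R) :
    Metric.diam (gradSet (fun x : Euc d => ‖x‖ ^ 2 - δ x ^ 2) E ∪
        gradSet (fun x : Euc d => ‖x‖ ^ 2 - δ' x ^ 2) E) ≤
      2 * Metric.diam E + 4 * R := by
  have key : ∀ g ∈ gradSet (fun x : Euc d => ‖x‖ ^ 2 - δ x ^ 2) E ∪
        gradSet (fun x : Euc d => ‖x‖ ^ 2 - δ' x ^ 2) E, ∃ x ∈ E, dist g ((2:ℝ) • x) ≤ 2 * R := by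
    rintro g (⟨x, hx, hd, rfl⟩ | ⟨x, hx, hd, rfl⟩)
    · refine ⟨x, hx, ?_⟩
      rw [dist_eq_norm]
      linarith [grad_bound δ hδ x hd, hRδ x hx]
    · refine ⟨x, hx, ?_⟩
      rw [dist_eq_norm]
      linarith [grad_bound δ' hδ' x hd, hRδ' x hx]
  have hdE : 0 ≤ Metric.diam E := Metric.diam_nonneg
  refine Metric.diam_le_of_forall_dist_le (by positivity) ?_
  intro a ha b hb
  obtain ⟨x, hx, hax⟩ := key a ha
  obtain ⟨y, hy, hby⟩ := key b hb
  have h1 := Metric.dist_le_diam_of_mem hE hx hy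
  have h2 : dist ((2:ℝ) • x) ((2:ℝ) • y) = 2 * dist x y := by
    rw [dist_smul₀]; norm_num
  have h3 := dist_triangle4 a ((2:ℝ) • x) ((2:ℝ) • y) b
  rw [dist_comm ((2:ℝ) • y) b] at h3
  linarith
end
end

section
/- Every distance-like function is 1-Lipschitz: if δ : ℝ^d → [0,∞) is such that x ↦ ‖x‖² − δ(x)² is convex, then for all x, y ∈ ℝ^d, |δ(x) − δ(y)| ≤ ‖x − y‖. -/
open MeasureTheory Metric Filter

noncomputable section

theorem stmt7_aux {d : ℕ} (δ : Euc d → ℝ) (hpos : ∀ x, 0 ≤ δ x)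
    (hconv : ConvexOn ℝ Set.univ (fun x : Euc d => ‖x‖ ^ 2 - δ x ^ 2)) (x v : Euc d) :
    δ (x + v) ≤ δ x + ‖v‖ := by
  rcases eq_or_ne v 0 with rfl | hv
  · simp
  have hr : 0 < ‖v‖ := norm_pos_iff.mpr hv
  apply le_of_forall_pos_le_add
  intro e he
  have ha := hpos x
  obtain ⟨c, hc⟩ : ∃ c, c = δ x + e := ⟨_, rfl⟩
  have hc0 : 0 < c := by linarith
  obtain ⟨T, hT⟩ : ∃ T, T = c / ‖v‖ := ⟨_, rfl⟩
  have hT0 : 0 < T := by rw [hT]; positivity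
  have hTr : T * ‖v‖ = c := by rw [hT]; field_simp
  have h := hconv.2 (Set.mem_univ (x - T • v)) (Set.mem_univ (x + v))
    (by positivity : 0 ≤ 1 / (1 + T)) (by positivity : 0 ≤ T / (1 + T)) (by field_simp)
  have hx : (1 / (1 + T)) • (x - T • v) + (T / (1 + T)) • (x + v) = x := by
    have h1 : (1 / (1 + T)) + (T / (1 + T)) = 1 := by field_simp
    have h2 : -((1 / (1 + T)) * T) + (T / (1 + T)) = 0 := by field_simp; ring
    calc _ = ((1 / (1 + T)) + (T / (1 + T))) • x
          + (-((1 / (1 + T)) * T) + (T / (1 + T))) • v := by module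
      _ = x := by rw [h1, h2]; simp
  simp only [hx, smul_eq_mul] at h
  rw [norm_sub_sq_real, norm_add_sq_real, inner_smul_right, norm_smul, Real.norm_eq_abs,
    abs_of_pos hT0, hTr] at h
  have hz := sq_nonneg (δ (x - T • v))
  generalize δ (x - T • v) = z at *
  generalize inner ℝ x v = w at *
  have h' : (‖x‖ ^ 2 - δ x ^ 2) * (1 + T) ≤
      (‖x‖ ^ 2 - 2 * (T * w) + c ^ 2 - z ^ 2)
      + T * (‖x‖ ^ 2 + 2 * w + ‖v‖ ^ 2 - δ (x + v) ^ 2) := by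
    have := mul_le_mul_of_nonneg_right h (by positivity : 0 ≤ 1 + T)
    refine this.trans (le_of_eq ?_)
    field_simp
  have h2 : T * δ (x + v) ^ 2 ≤ T * (c + ‖v‖) ^ 2 := by
    have e1 : T * ‖v‖ ^ 2 = c * ‖v‖ := by rw [← hTr]; ring
    have e2 : T * (c * ‖v‖) = c ^ 2 := by rw [sq]; nth_rw 2 [← hTr]; rw [← hTr]; ring
    have e3 : δ x ^ 2 ≤ c ^ 2 := by gcongr; linarith
    have e4 : T * δ x ^ 2 ≤ T * c ^ 2 := by gcongr
    have e5 : T * (c + ‖v‖) ^ 2 = T * c ^ 2 + 2 * c ^ 2 + c * ‖v‖ := by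
      linear_combination e1 + 2 * e2
    nlinarith
  have h3 := le_of_mul_le_mul_left h2 hT0
  have h4 := le_trans (le_abs_self _) (abs_le_of_sq_le_sq h3 (by positivity))
  linarith

/-- Every distance-like function is 1-Lipschitz: if `δ : ℝ^d → [0,∞)` is such that
`x ↦ ‖x‖² - δ(x)²` is convex, then `|δ(x) - δ(y)| ≤ ‖x - y‖` for all `x, y`. -/
theorem stmt7 {d : ℕ} (δ : Euc d → ℝ) (hpos : ∀ x, 0 ≤ δ x)
    (hconv : ConvexOn ℝ Set.univ (fun x : Euc d => ‖x‖ ^ 2 - δ x ^ 2)) :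
    ∀ x y : Euc d, |δ x - δ y| ≤ ‖x - y‖ := by
  intro x y
  have h1 := stmt7_aux δ hpos hconv x (y - x)
  have h2 := stmt7_aux δ hpos hconv y (x - y)
  rw [add_sub_cancel] at h1 h2
  rw [norm_sub_rev] at h1
  rw [abs_le]
  constructor <;> linarith
end
end

section
/- Let K ⊂ ℝ^d be compact, δ a distance-like function, χ : ℝ^d → [0,∞) bounded Lipschitz, R > 0, and E ⊂ ℝ^d a measurable set on which ‖n_{d_K}(x)‖ ≤ R and ‖n_δ(x)‖ ≤ R for almost every x ∈ E. Setting A_{d_K}(x) := n_{d_K}(x) ⊗ n_{d_K}(x) χ(x − n_{d_K}(x)) and A_δ(x) := n_δ(x) ⊗ n_δ(x) χ(x − n_δ(x)), one has ‖∫_E (A_{d_K}(x) − A_δ(x)) dx‖_op ≤ ‖χ‖_BL (R² + 2R) ∫_E ‖n_{d_K}(x) − n_δ(x)‖ dx. -/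
open MeasureTheory Metric Filter
open scoped NNReal

noncomputable section

theorem tensor_norm_le {d : ℕ} (v w : Euc d) : ‖tensor v w‖ ≤ ‖v‖ * ‖w‖ := by
  refine ContinuousLinearMap.opNorm_le_bound _ (by positivity) fun u => ?_
  have h1 : tensor v w u = (inner ℝ w u : ℝ) • v := by
    simp [tensor]
  rw [h1, norm_smul]
  have := norm_inner_le_norm (𝕜 := ℝ) w u
  nlinarith [norm_nonneg v]

theorem tensor_split {d : ℕ} (a b : Euc d) (s t : ℝ) :
    s • tensor a a - t • tensor b b =
      (s - t) • tensor a a + t • (tensor (a - b) a + tensor b (a - b)) := by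
  ext1 u
  simp only [tensor, ContinuousLinearMap.sub_apply, ContinuousLinearMap.add_apply,
    ContinuousLinearMap.smul_apply, ContinuousLinearMap.comp_apply, innerSL_apply_apply,
    ContinuousLinearMap.toSpanSingleton_apply, inner_sub_left]
  module

theorem tensor_pointwise {d : ℕ} (a b : Euc d) (s t Cb L R : ℝ) (hR : 0 < R) (hL : 0 ≤ L)
    (ha : ‖a‖ ≤ R) (hb : ‖b‖ ≤ R) (ht : |t| ≤ Cb) (hst : |s - t| ≤ L * ‖a - b‖) :
    ‖s • tensor a a - t • tensor b b‖ ≤ (Cb + L) * (R ^ 2 + 2 * R) * ‖a - b‖ := by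
  have hC : 0 ≤ Cb := (abs_nonneg t).trans ht
  have hn := norm_nonneg (a - b)
  rw [tensor_split]
  have h1 : ‖(s - t) • tensor a a‖ ≤ (L * ‖a - b‖) * (R * R) := by
    rw [norm_smul, Real.norm_eq_abs]
    have := tensor_norm_le a a
    gcongr
    exact this.trans (by gcongr)
  have h2 : ‖t • (tensor (a - b) a + tensor b (a - b))‖ ≤
      Cb * (‖a - b‖ * R + R * ‖a - b‖) := by
    rw [norm_smul, Real.norm_eq_abs]
    gcongr
    refine (norm_add_le _ _).trans (add_le_add ?_ ?_)
    · exact (tensor_norm_le _ _).trans (by gcongr)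
    · exact (tensor_norm_le _ _).trans (by gcongr)
  refine (norm_add_le _ _).trans ((add_le_add h1 h2).trans ?_)
  have e1 : 0 ≤ Cb * R ^ 2 * ‖a - b‖ := by positivity
  have e2 : 0 ≤ L * R * ‖a - b‖ := by positivity
  nlinarith

/-- With `A_{d_K}(x) = n_{d_K}(x) ⊗ n_{d_K}(x) χ(x - n_{d_K}(x))` and similarly `A_δ`,
if `‖n_{d_K}‖ ≤ R` and `‖n_δ‖ ≤ R` a.e. on `E`, then
`‖∫_E (A_{d_K} - A_δ)‖_op ≤ ‖χ‖_BL (R² + 2R) ∫_E ‖n_{d_K} - n_δ‖`, the BL norm being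
represented by `Cb + L` (the integrability of `‖n_{d_K} - n_δ‖` on `E` makes the
right-hand side the intended finite quantity). -/
theorem stmt14 {d : ℕ} (K : Set (Euc d)) (hK : IsCompact K) (hKne : K.Nonempty)
    (δ : Euc d → ℝ) (hδ : DistanceLike δ)
    (χ : Euc d → ℝ) (Cb : ℝ) (L : ℝ≥0) (hχ0 : ∀ x, 0 ≤ χ x)
    (hCb : ∀ x, |χ x| ≤ Cb) (hL : LipschitzWith L χ)
    (R : ℝ) (hR : 0 < R) (E : Set (Euc d)) (hE : MeasurableSet E)
    (hbK : ∀ᵐ x : Euc d, x ∈ E → ‖nvec (fun z => infDist z K) x‖ ≤ R)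
    (hbδ : ∀ᵐ x : Euc d, x ∈ E → ‖nvec δ x‖ ≤ R)
    (hint : IntegrableOn (fun x => ‖nvec (fun z => infDist z K) x - nvec δ x‖) E) :
    ‖∫ x in E,
        (χ (x - nvec (fun z => infDist z K) x) •
            tensor (nvec (fun z => infDist z K) x) (nvec (fun z => infDist z K) x) -
          χ (x - nvec δ x) • tensor (nvec δ x) (nvec δ x))‖ ≤
      (Cb + (L : ℝ)) * (R ^ 2 + 2 * R) *
        ∫ x in E, ‖nvec (fun z => infDist z K) x - nvec δ x‖ := by
  rw [← integral_const_mul]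
  refine norm_integral_le_of_norm_le (hint.const_mul _) ?_
  rw [ae_restrict_iff' hE]
  filter_upwards [hbK, hbδ] with x h1 h2 hx
  refine tensor_pointwise _ _ _ _ _ _ _ hR L.2 (h1 hx) (h2 hx) (hCb _) ?_
  have := hL.dist_le_mul (x - nvec (fun z => infDist z K) x) (x - nvec δ x)
  rw [Real.dist_eq, dist_sub_left, dist_eq_norm] at this
  exact this
end
end

section
/- Let μ and μ' be probability measures on ℝ^d with finite second moments and let m₀ ∈ (0,1). Then sup_{x∈ℝ^d} |d_{μ,m₀}(x) − d_{μ',m₀}(x)| ≤ (1/√m₀) W₂(μ, μ'). -/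
open MeasureTheory Metric Filter
open scoped NNReal ENNReal

noncomputable section

/-- `δ_{μ,m}(x) := inf {r ≥ 0 : μ(B̄(x,r)) ≥ m}`. -/
def pseudoDist {d : ℕ} (μ : Measure (Euc d)) (m : ℝ) (x : Euc d) : ℝ :=
  sInf {r : ℝ | 0 ≤ r ∧ ENNReal.ofReal m ≤ μ (closedBall x r)}

/-- The distance to the measure `μ` with parameter `m₀`:
`d_{μ,m₀}(x) := ((1/m₀) ∫₀^{m₀} δ_{μ,m}(x)² dm)^{1/2}`. -/
def dtm {d : ℕ} (μ : Measure (Euc d)) (m₀ : ℝ) (x : Euc d) : ℝ :=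
  Real.sqrt ((1 / m₀) * ∫ m in (0:ℝ)..m₀, pseudoDist μ m x ^ 2)

/-- The 2-Wasserstein distance `W₂(μ,ν)` (as an extended real), defined as the infimum
of `(∫ ‖x - y‖² dπ)^{1/2}` over all couplings `π` of `μ` and `ν`. -/
def W2 {d : ℕ} (μ ν : Measure (Euc d)) : ℝ≥0∞ :=
  sInf {c | ∃ π : Measure (Euc d × Euc d), π.map Prod.fst = μ ∧ π.map Prod.snd = ν ∧
    c = (∫⁻ p, (‖p.1 - p.2‖₊ : ℝ≥0∞) ^ 2 ∂π) ^ (1 / 2 : ℝ)}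

theorem pd_le_iff {d : ℕ} (μ : Measure (Euc d)) [IsProbabilityMeasure μ] (x : Euc d)
    (m r : ℝ) (hm1 : m < 1) (hr : 0 ≤ r) :
    pseudoDist μ m x ≤ r ↔ ENNReal.ofReal m ≤ μ (closedBall x r) := by
  have hbdd : BddBelow {r : ℝ | 0 ≤ r ∧ ENNReal.ofReal m ≤ μ (closedBall x r)} :=
    ⟨0, fun r h => h.1⟩
  constructor
  · intro h
    have hne : {r : ℝ | 0 ≤ r ∧ ENNReal.ofReal m ≤ μ (closedBall x r)}.Nonempty := by
      have hmono : Monotone (fun n : ℕ => closedBall x (n : ℝ)) := by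
        intro a b hab
        exact closedBall_subset_closedBall (by exact_mod_cast hab)
      have ht := tendsto_measure_iUnion_atTop (μ := μ) hmono
      rw [iUnion_closedBall_nat, measure_univ] at ht
      have hlt : ENNReal.ofReal m < 1 := by
        rw [ENNReal.ofReal_lt_one]; exact hm1
      obtain ⟨n, hn⟩ := (ht.eventually (lt_mem_nhds hlt)).exists
      exact ⟨n, by positivity, le_of_lt hn⟩
    have hgt : ∀ r' > r, ENNReal.ofReal m ≤ μ (closedBall x r') := by
      intro r' hr'
      obtain ⟨s, hs, hs'⟩ := exists_lt_of_csInf_lt hne (lt_of_le_of_lt h hr')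
      exact hs.2.trans (measure_mono (closedBall_subset_closedBall hs'.le))
    have ht := tendsto_measure_biInter_gt (μ := μ) (s := fun r => closedBall x r) (a := r)
      (fun r' _ => measurableSet_closedBall.nullMeasurableSet)
      (fun i j _ hij => closedBall_subset_closedBall hij)
      ⟨r + 1, by simp, measure_ne_top _ _⟩
    have he : (⋂ r' > r, closedBall x r') = closedBall x r := by
      ext y
      simp only [Set.mem_iInter, mem_closedBall]
      exact ⟨fun h => le_of_forall_gt_imp_ge_of_dense h, fun h i hi => h.trans (le_of_lt hi)⟩
    rw [he] at ht
    refine ge_of_tendsto ht ?_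
    filter_upwards [self_mem_nhdsWithin] with r' hr' using hgt r' hr'
  · intro h
    exact csInf_le hbdd ⟨hr, h⟩

theorem pd_nonneg {d : ℕ} (μ : Measure (Euc d)) (x : Euc d) (m : ℝ) :
    0 ≤ pseudoDist μ m x := Real.sInf_nonneg (fun _ h => h.1)

theorem pd_mono {d : ℕ} (μ : Measure (Euc d)) [IsProbabilityMeasure μ] (x : Euc d)
    (a b : ℝ) (hab : a ≤ b) (hb : b < 1) : pseudoDist μ a x ≤ pseudoDist μ b x := by
  rw [pd_le_iff μ x a _ (hab.trans_lt hb) (pd_nonneg μ x b)]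
  exact (ENNReal.ofReal_le_ofReal hab).trans ((pd_le_iff μ x b _ hb (pd_nonneg μ x b)).1 le_rfl)

/-- The lower integral of the squared quantile function. -/
def lowInt {d : ℕ} (μ : Measure (Euc d)) (m₀ : ℝ) (x : Euc d) : ℝ≥0∞ :=
  ∫⁻ m in Set.Ioc 0 m₀, ENNReal.ofReal (pseudoDist μ m x ^ 2)

theorem pd_aemeas {d : ℕ} (μ : Measure (Euc d)) [IsProbabilityMeasure μ] (x : Euc d)
    (m₀ : ℝ) (hm : m₀ < 1) :
    AEMeasurable (fun m => pseudoDist μ m x) (volume.restrict (Set.Ioc 0 m₀)) := by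
  apply aemeasurable_restrict_of_monotoneOn measurableSet_Ioc
  intro a ha b hb hab
  exact pd_mono μ x a b hab (hb.2.trans_lt hm)

theorem lowInt_ne_top {d : ℕ} (μ : Measure (Euc d)) [IsProbabilityMeasure μ] (x : Euc d)
    (m₀ : ℝ) (hm : m₀ < 1) : lowInt μ m₀ x ≠ ⊤ := by
  have : lowInt μ m₀ x ≤ ∫⁻ m in Set.Ioc 0 m₀, ENNReal.ofReal (pseudoDist μ m₀ x ^ 2) := by
    apply setLIntegral_mono measurable_const
    intro m hm'
    have := pd_nonneg μ x m
    have := pd_mono μ x m m₀ hm'.2 hm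
    gcongr
  refine ne_top_of_le_ne_top ?_ this
  rw [setLIntegral_const]
  exact ENNReal.mul_ne_top ENNReal.ofReal_ne_top (by simp)

theorem dtm_eq {d : ℕ} (μ : Measure (Euc d)) [IsProbabilityMeasure μ] (x : Euc d)
    (m₀ : ℝ) (h0 : 0 < m₀) (hm : m₀ < 1) :
    dtm μ m₀ x = (1 / Real.sqrt m₀) * ((lowInt μ m₀ x) ^ (1 / 2 : ℝ)).toReal := by
  unfold dtm lowInt
  rw [intervalIntegral.integral_of_le h0.le, integral_eq_lintegral_of_nonneg_ae
    (Eventually.of_forall fun m => sq_nonneg _) ((pd_aemeas μ x m₀ hm).pow_const 2).aestronglyMeasurable,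
    Real.sqrt_mul (by positivity), Real.sqrt_div zero_le_one, Real.sqrt_one, ← ENNReal.toReal_rpow,
    Real.sqrt_eq_rpow, Real.sqrt_eq_rpow]

theorem lowInt_layer {d : ℕ} (μ : Measure (Euc d)) [IsProbabilityMeasure μ] (x : Euc d)
    (m₀ : ℝ) (hm : m₀ < 1) :
    lowInt μ m₀ x = ∫⁻ t in Set.Ioi (0:ℝ), (ENNReal.ofReal m₀ - μ (closedBall x (√t))) := by
  unfold lowInt
  rw [lintegral_eq_lintegral_meas_lt _ (Eventually.of_forall fun m => sq_nonneg _)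
    ((pd_aemeas μ x m₀ hm).pow_const 2)]
  apply setLIntegral_congr_fun measurableSet_Ioi
  intro t ht
  have hs : {a : ℝ | t < pseudoDist μ a x ^ 2} ∩ Set.Ioc 0 m₀
      = Set.Ioc (μ (closedBall x (√t))).toReal m₀ := by
    ext a
    simp only [Set.mem_inter_iff, Set.mem_ofPred_eq, Set.mem_Ioc]
    have h1 : t < pseudoDist μ a x ^ 2 ↔ √t < pseudoDist μ a x := by
      exact (Real.sqrt_lt (le_of_lt ht) (pd_nonneg μ x a)).symm
    rw [h1]
    constructor
    · rintro ⟨h, h0, ha⟩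
      refine ⟨?_, ha⟩
      rw [← not_le, pd_le_iff μ x a _ (ha.trans_lt hm) (Real.sqrt_nonneg t), not_le] at h
      exact (ENNReal.lt_ofReal_iff_toReal_lt (measure_ne_top _ _)).1 h
    · rintro ⟨h, ha⟩
      refine ⟨?_, ENNReal.toReal_nonneg.trans_lt h, ha⟩
      rw [← not_le, pd_le_iff μ x a _ (ha.trans_lt hm) (Real.sqrt_nonneg t), not_le]
      exact (ENNReal.lt_ofReal_iff_toReal_lt (measure_ne_top _ _)).2 h
  simp only
  rw [Measure.restrict_apply' measurableSet_Ioc, hs, Real.volume_Ioc,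
    ENNReal.ofReal_sub _ ENNReal.toReal_nonneg, ENNReal.ofReal_toReal (measure_ne_top _ _)]

theorem lowInt_le {d : ℕ} (μ : Measure (Euc d)) [IsProbabilityMeasure μ] (x : Euc d)
    (m₀ : ℝ) (hm : m₀ < 1) {Ω : Type*} [MeasurableSpace Ω] (ρ : Measure Ω) (X : Ω → Euc d)
    (hX : Measurable X) (hρ : ρ Set.univ = ENNReal.ofReal m₀) (hle : ρ.map X ≤ μ) :
    lowInt μ m₀ x ≤ ∫⁻ ω, ENNReal.ofReal (dist (X ω) x ^ 2) ∂ρ := by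
  rw [lowInt_layer μ x m₀ hm, lintegral_eq_lintegral_meas_lt _
    (Eventually.of_forall fun m => sq_nonneg _) (by fun_prop)]
  apply lintegral_mono
  intro t
  simp only
  rw [tsub_le_iff_left, ← hρ]
  calc ρ Set.univ ≤ ρ (X ⁻¹' closedBall x √t ∪ {a | t < dist (X a) x ^ 2}) := by
        apply measure_mono
        intro a _
        by_cases h : t < dist (X a) x ^ 2
        · exact Or.inr h
        · left
          exact Real.le_sqrt_of_sq_le (not_lt.1 h)
    _ ≤ _ := measure_union_le _ _
    _ ≤ _ := by
        gcongr
        rw [← Measure.map_apply hX measurableSet_closedBall]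
        exact hle _

theorem ball_le {d : ℕ} (μ : Measure (Euc d)) [IsProbabilityMeasure μ] (x : Euc d)
    (m₀ : ℝ) (hm : m₀ < 1) : μ (ball x (pseudoDist μ m₀ x)) ≤ ENNReal.ofReal m₀ := by
  set R := pseudoDist μ m₀ x with hR
  have hU : ball x R = ⋃ n : ℕ, closedBall x (R - 1 / ((n : ℝ) + 1)) := by
    ext y
    simp only [mem_ball, Set.mem_iUnion, mem_closedBall]
    constructor
    · intro h
      obtain ⟨n, hn⟩ := exists_nat_one_div_lt (sub_pos.2 h)
      exact ⟨n, by linarith⟩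
    · rintro ⟨n, hn⟩
      have : (0:ℝ) < 1 / ((n : ℝ) + 1) := by positivity
      linarith
  have hmono : Monotone (fun n : ℕ => closedBall x (R - 1 / ((n : ℝ) + 1))) := by
    intro a b hab
    apply closedBall_subset_closedBall
    have := Nat.one_div_le_one_div (α := ℝ) hab
    linarith
  rw [hU, hmono.measure_iUnion]
  apply iSup_le
  intro n
  have hn : (0:ℝ) < 1 / ((n : ℝ) + 1) := by positivity
  rcases lt_or_ge (R - 1 / ((n : ℝ) + 1)) 0 with h | h
  · rw [closedBall_eq_empty.2 h]; simp
  · by_contra hc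
    have := (pd_le_iff μ x m₀ _ hm h).2 (not_le.1 hc).le
    linarith

theorem exists_density {d : ℕ} (μ : Measure (Euc d)) [IsProbabilityMeasure μ] (x : Euc d)
    (m₀ : ℝ) (hm : m₀ < 1) : ∃ h : Euc d → ℝ≥0∞, Measurable h ∧ (∀ y, h y ≤ 1) ∧
      ∫⁻ y, h y ∂μ = ENNReal.ofReal m₀ ∧
      ∫⁻ y, ENNReal.ofReal (dist y x ^ 2) ∂(μ.withDensity h) ≤ lowInt μ m₀ x := by
  set R := pseudoDist μ m₀ x with hR
  have hR0 : 0 ≤ R := pd_nonneg μ x m₀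
  have hb : μ (ball x R) ≤ ENNReal.ofReal m₀ := ball_le μ x m₀ hm
  have hcb : ENNReal.ofReal m₀ ≤ μ (closedBall x R) := (pd_le_iff μ x m₀ _ hm hR0).1 le_rfl
  have hsum : μ (closedBall x R) = μ (ball x R) + μ (sphere x R) := by
    rw [← ball_union_sphere, measure_union sphere_disjoint_ball.symm isClosed_sphere.measurableSet]
  set c : ℝ≥0∞ := (ENNReal.ofReal m₀ - μ (ball x R)) / μ (sphere x R) with hc
  have hsub : ENNReal.ofReal m₀ - μ (ball x R) ≤ μ (sphere x R) := by
    rw [tsub_le_iff_left, ← hsum]; exact hcb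
  have hc1 : c ≤ 1 := ENNReal.div_le_of_le_mul (by simpa using hsub)
  have hcm : c * μ (sphere x R) = ENNReal.ofReal m₀ - μ (ball x R) := by
    rcases eq_or_ne (μ (sphere x R)) 0 with h0 | h0
    · rw [h0] at hsub ⊢
      simp only [mul_zero]
      exact (le_antisymm hsub bot_le).symm
    · exact ENNReal.div_mul_cancel h0 (measure_ne_top _ _)
  set h : Euc d → ℝ≥0∞ := fun y => (ball x R).indicator 1 y + (sphere x R).indicator (fun _ => c) y
    with hh
  have hmeas : Measurable h :=
    (measurable_one.indicator measurableSet_ball).add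
      (measurable_const.indicator isClosed_sphere.measurableSet)
  have hint : ∫⁻ y, h y ∂μ = ENNReal.ofReal m₀ := by
    rw [hh, lintegral_add_left (measurable_one.indicator measurableSet_ball),
      lintegral_indicator_one measurableSet_ball,
      lintegral_indicator_const isClosed_sphere.measurableSet, hcm]
    exact add_tsub_cancel_of_le hb
  have hin : ∀ y, dist y x < R → h y = 1 := by
    intro y hy
    have h1 : y ∈ ball x R := hy
    have h2 : y ∉ sphere x R := fun h => hy.ne h
    simp only [hh, Set.indicator_of_mem h1, Set.indicator_of_notMem h2, Pi.one_apply, add_zero]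
  have hout : ∀ y, R < dist y x → h y = 0 := by
    intro y hy
    have h1 : y ∉ ball x R := by simp [hy.le]
    have h2 : y ∉ sphere x R := fun h => hy.ne' h
    simp only [hh, Set.indicator_of_notMem h1, Set.indicator_of_notMem h2, add_zero]
  refine ⟨h, hmeas, ?_, hint, ?_⟩
  · intro y
    rcases lt_trichotomy (dist y x) R with hy | hy | hy
    · rw [hin y hy]
    · have h1 : y ∉ ball x R := by simp [hy]
      have h2 : y ∈ sphere x R := hy
      simpa only [hh, Set.indicator_of_notMem h1, Set.indicator_of_mem h2, zero_add] using hc1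
    · rw [hout y hy]; exact zero_le_one
  · rw [lowInt_layer μ x m₀ hm, lintegral_eq_lintegral_meas_lt _
      (Eventually.of_forall fun m => sq_nonneg _) (by fun_prop)]
    apply setLIntegral_mono' measurableSet_Ioi
    intro t ht
    have hset : {a : Euc d | t < dist a x ^ 2} = (closedBall x √t)ᶜ := by
      ext a
      simp only [Set.mem_ofPred_eq, Set.mem_compl_iff, mem_closedBall, not_le]
      exact (Real.sqrt_lt (le_of_lt ht) dist_nonneg).symm
    rw [hset]
    rcases lt_or_ge (√t) R with hlt | hge
    · have htot : μ.withDensity h Set.univ = ENNReal.ofReal m₀ := by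
        rw [withDensity_apply _ MeasurableSet.univ, setLIntegral_univ, hint]
      have hball : μ.withDensity h (closedBall x √t) = μ (closedBall x √t) := by
        rw [withDensity_apply _ measurableSet_closedBall,
          setLIntegral_congr_fun (g := fun _ => 1) measurableSet_closedBall
            (fun y hy => hin y (lt_of_le_of_lt hy hlt)), setLIntegral_one]
      have hadd := measure_add_measure_compl (μ := μ.withDensity h)
        (measurableSet_closedBall (x := x) (ε := √t))
      rw [htot, hball] at hadd
      rw [← hadd, ENNReal.add_sub_cancel_left (measure_ne_top _ _)]
    · have hz : μ.withDensity h (closedBall x √t)ᶜ = 0 := by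
        rw [withDensity_apply _ measurableSet_closedBall.compl,
          setLIntegral_congr_fun (g := fun _ => 0) measurableSet_closedBall.compl
            (fun y hy => hout y (lt_of_le_of_lt hge (not_le.1 hy))), lintegral_zero]
      rw [hz]
      exact bot_le

theorem lowInt_stab {d : ℕ} (μ μ' : Measure (Euc d)) [IsProbabilityMeasure μ]
    [IsProbabilityMeasure μ'] (x : Euc d) (m₀ : ℝ) (hm : m₀ < 1)
    {Ω : Type*} [MeasurableSpace Ω] (P : Measure Ω) (X Y : Ω → Euc d)
    (hX : Measurable X) (hY : Measurable Y) (hPX : P.map X = μ) (hPY : P.map Y = μ') :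
    lowInt μ m₀ x ^ (1 / 2 : ℝ) ≤ lowInt μ' m₀ x ^ (1 / 2 : ℝ) +
      (∫⁻ ω, edist (X ω) (Y ω) ^ 2 ∂P) ^ (1 / 2 : ℝ) := by
  obtain ⟨h, hmeas, h1, hint, hle⟩ := exists_density μ' x m₀ hm
  have hof : ∀ y : Euc d, ENNReal.ofReal (dist y x ^ 2) = edist y x ^ (2 : ℝ) := by
    intro y
    rw [ENNReal.ofReal_pow dist_nonneg, ← edist_dist]
    norm_cast
  set ρ := P.withDensity (h ∘ Y) with hρ
  have hρP : ρ ≤ P := by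
    calc ρ ≤ P.withDensity 1 := withDensity_mono (Eventually.of_forall fun ω => h1 _)
      _ = P := withDensity_one
  have hρu : ρ Set.univ = ENNReal.ofReal m₀ := by
    rw [hρ, withDensity_apply _ MeasurableSet.univ, setLIntegral_univ, ← hint, ← hPY,
      lintegral_map hmeas hY]
    rfl
  have hA := lowInt_le μ x m₀ hm ρ X hX hρu (hPX ▸ Measure.map_mono hρP hX)
  have hB : ∫⁻ ω, ENNReal.ofReal (dist (Y ω) x ^ 2) ∂ρ ≤ lowInt μ' m₀ x := by
    refine le_trans (le_of_eq ?_) hle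
    have hg : Measurable fun y : Euc d => ENNReal.ofReal (dist y x ^ 2) := by fun_prop
    rw [hρ, lintegral_withDensity_eq_lintegral_mul _ (hmeas.comp hY) (by fun_prop),
      lintegral_withDensity_eq_lintegral_mul _ hmeas hg, ← hPY,
      lintegral_map (hmeas.mul hg) hY]
    rfl
  simp only [hof] at hA hB
  calc lowInt μ m₀ x ^ (1 / 2 : ℝ) ≤ (∫⁻ ω, edist (X ω) x ^ (2 : ℝ) ∂ρ) ^ (1 / 2 : ℝ) := by
        gcongr
    _ ≤ (∫⁻ ω, ((fun ω => edist (Y ω) x) + fun ω => edist (X ω) (Y ω)) ω ^ (2 : ℝ) ∂ρ)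
          ^ (1 / 2 : ℝ) := by
        gcongr with ω
        simp only [Pi.add_apply]
        rw [add_comm]
        exact edist_triangle _ _ _
    _ ≤ (∫⁻ ω, edist (Y ω) x ^ (2 : ℝ) ∂ρ) ^ (1 / 2 : ℝ)
          + (∫⁻ ω, edist (X ω) (Y ω) ^ (2 : ℝ) ∂ρ) ^ (1 / 2 : ℝ) :=
        ENNReal.lintegral_Lp_add_le (by fun_prop) (by fun_prop) (by norm_num)
    _ ≤ _ := by
        gcongr
        · exact le_of_eq (by norm_cast)

theorem W2_ne_top {d : ℕ} (μ μ' : Measure (Euc d))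
    [IsProbabilityMeasure μ] [IsProbabilityMeasure μ']
    (hμ : ∫⁻ x, (‖x‖₊ : ℝ≥0∞) ^ 2 ∂μ < ⊤) (hμ' : ∫⁻ x, (‖x‖₊ : ℝ≥0∞) ^ 2 ∂μ' < ⊤) :
    W2 μ μ' ≠ ⊤ := by
  have hle : W2 μ μ' ≤ (∫⁻ p, (‖p.1 - p.2‖₊ : ℝ≥0∞) ^ 2 ∂(μ.prod μ')) ^ (1 / 2 : ℝ) :=
    sInf_le ⟨μ.prod μ', by simp, by simp, rfl⟩
  refine ne_top_of_le_ne_top (ENNReal.rpow_ne_top_of_nonneg (by norm_num) ?_) hle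
  have hb : ∫⁻ p, (‖p.1 - p.2‖₊ : ℝ≥0∞) ^ 2 ∂(μ.prod μ')
      ≤ ∫⁻ p, (2 * (‖p.1‖₊ : ℝ≥0∞) ^ 2 + 2 * (‖p.2‖₊ : ℝ≥0∞) ^ 2) ∂(μ.prod μ') := by
    apply lintegral_mono
    intro p
    have h : ‖p.1 - p.2‖₊ ^ 2 ≤ 2 * ‖p.1‖₊ ^ 2 + 2 * ‖p.2‖₊ ^ 2 := by
      rw [← NNReal.coe_le_coe]
      push_cast
      have h1 := norm_sub_le p.1 p.2
      have h2 := norm_nonneg (p.1 - p.2)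
      nlinarith [sq_nonneg (‖p.1‖ - ‖p.2‖)]
    simp only
    exact_mod_cast h
  refine ne_top_of_le_ne_top ?_ hb
  rw [lintegral_add_left (by fun_prop), lintegral_const_mul _ (by fun_prop),
    lintegral_const_mul _ (by fun_prop)]
  have e1 : ∫⁻ p, (‖p.1‖₊ : ℝ≥0∞) ^ 2 ∂(μ.prod μ') = ∫⁻ x, (‖x‖₊ : ℝ≥0∞) ^ 2 ∂μ := by
    have := lintegral_map (μ := μ.prod μ') (f := fun x : Euc d => (‖x‖₊ : ℝ≥0∞) ^ 2)
      (by fun_prop) measurable_fst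
    rw [← this]; simp
  have e2 : ∫⁻ p, (‖p.2‖₊ : ℝ≥0∞) ^ 2 ∂(μ.prod μ') = ∫⁻ x, (‖x‖₊ : ℝ≥0∞) ^ 2 ∂μ' := by
    have := lintegral_map (μ := μ.prod μ') (f := fun x : Euc d => (‖x‖₊ : ℝ≥0∞) ^ 2)
      (by fun_prop) measurable_snd
    rw [← this]; simp
  rw [e1, e2]
  exact ENNReal.add_ne_top.2 ⟨ENNReal.mul_ne_top (by simp) hμ.ne, ENNReal.mul_ne_top (by simp) hμ'.ne⟩

/-- Stability of the distance to a measure: for probability measures `μ, μ'` with finite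
second moments and `m₀ ∈ (0,1)`,
`sup_x |d_{μ,m₀}(x) - d_{μ',m₀}(x)| ≤ (1/√m₀) W₂(μ, μ')`. -/
theorem stmt19 {d : ℕ} (μ μ' : Measure (Euc d))
    [IsProbabilityMeasure μ] [IsProbabilityMeasure μ']
    (hμ : ∫⁻ x, (‖x‖₊ : ℝ≥0∞) ^ 2 ∂μ < ⊤) (hμ' : ∫⁻ x, (‖x‖₊ : ℝ≥0∞) ^ 2 ∂μ' < ⊤)
    (m₀ : ℝ) (hm₀ : m₀ ∈ Set.Ioo (0 : ℝ) 1) :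
    ∀ x : Euc d, |dtm μ m₀ x - dtm μ' m₀ x| ≤ (1 / Real.sqrt m₀) * (W2 μ μ').toReal := by
  intro x
  have hW := W2_ne_top μ μ' hμ hμ'
  obtain ⟨h0, hm⟩ := hm₀
  have key : lowInt μ m₀ x ^ (1 / 2 : ℝ) ≤ lowInt μ' m₀ x ^ (1 / 2 : ℝ) + W2 μ μ' ∧
      lowInt μ' m₀ x ^ (1 / 2 : ℝ) ≤ lowInt μ m₀ x ^ (1 / 2 : ℝ) + W2 μ μ' := by
    constructor
    · rw [← tsub_le_iff_left]
      refine le_sInf ?_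
      rintro c ⟨π, h1, h2, rfl⟩
      rw [tsub_le_iff_left]
      have := lowInt_stab μ μ' x m₀ hm π Prod.fst Prod.snd measurable_fst measurable_snd h1 h2
      simp only [edist_eq_enorm_sub] at this
      exact this
    · rw [← tsub_le_iff_left]
      refine le_sInf ?_
      rintro c ⟨π, h1, h2, rfl⟩
      rw [tsub_le_iff_left]
      have := lowInt_stab μ' μ x m₀ hm π Prod.snd Prod.fst measurable_snd measurable_fst h2 h1
      simp only [edist_comm (Prod.snd _), edist_eq_enorm_sub] at this
      exact this
  have f1 : lowInt μ m₀ x ^ (1 / 2 : ℝ) ≠ ⊤ :=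
    ENNReal.rpow_ne_top_of_nonneg (by norm_num) (lowInt_ne_top μ x m₀ hm)
  have f2 : lowInt μ' m₀ x ^ (1 / 2 : ℝ) ≠ ⊤ :=
    ENNReal.rpow_ne_top_of_nonneg (by norm_num) (lowInt_ne_top μ' x m₀ hm)
  have k1 := ENNReal.toReal_mono (ENNReal.add_ne_top.2 ⟨f2, hW⟩) key.1
  have k2 := ENNReal.toReal_mono (ENNReal.add_ne_top.2 ⟨f1, hW⟩) key.2
  rw [ENNReal.toReal_add f2 hW] at k1
  rw [ENNReal.toReal_add f1 hW] at k2
  have hs : 0 ≤ 1 / Real.sqrt m₀ := by positivity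
  rw [dtm_eq μ x m₀ h0 hm, dtm_eq μ' x m₀ h0 hm, ← mul_sub, abs_mul, abs_of_nonneg hs]
  apply mul_le_mul_of_nonneg_left _ hs
  rw [abs_le]
  constructor <;> linarith
end
end
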